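/- arXiv:2503.02669 — 3 statements merged into one kernel-verified Lean document; each statement's English description precedes it below -/
import Mathlib

section
/- Assume (H₁)–(H₄) and (H₅') hold and L < 1, where L := (2·l_K²/η_G²)(l_G·√(4l_G²+2η_G²) + 2l_G² + η_G²), and let (x,u) ∈ C(I,H₁) × C(I,Ω) be the unique solution of the NFDQVI. Let ε > 0 and suppose z ∈ C(I,H₁), υ ∈ C(I,Ω) and h ∈ C(I,H₁) satisfy: ‖h(s)‖ ≤ ε for all s ∈ I; z(s) = z(0) + (1/Γ(q))·∫₀^s (s−ζ)^{q−1}[f(ζ,z(ζ)) + g(ζ,z(ζ),υ(ζ)) + h(ζ)] dζ for all s ∈ I; υ(s) solves PQVI(s,z(s)) for all s ∈ I; and z(0) = x₀ + ψ(x). Then ‖z(s) − x(s)‖ ≤ (T^q/Γ(q+1))·ε·E_q((l_f + ξ)·s^q) for all s ∈ I, where ξ := l_g(1+√(κ/(1−L))). In particular the NFDQVI is Mittag-Leffler-Hyers-Ulam stable. -/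
/-!
The estimate rests on two facts.

*Stability of the quasi-variational inequality.* If `u₁`, `u₂` solve the inequality for the
parameters `x₁`, `x₂`, then `‖u₁ - u₂‖ ≤ √(κ / (1 - L)) ‖x₁ - x₂‖`. For `ρ > 0` the point
`u₂` is the projection of `u₂ - ρ G(s, x₂, u₂)` onto `K(u₂)`. Projecting the same point onto
`K(u₁)` moves the result by at most `l_K ‖u₁ - u₂‖`, and strong pseudomonotonicity on `K(u₁)`
controls its distance to `u₁`. Letting `ρ → ∞` gives
`η_G D ≤ (η_G + l_G) l_K D + l_G δ` with `D = ‖u₁ - u₂‖`, `δ = ‖x₁ - x₂‖` (`qvi_dist`), which a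
weighted Young inequality turns into `(1 - L) D² ≤ κ δ²` (`dist_le_sqrt_kconst`).

*Fractional Gronwall inequality.* Subtracting the two integral equations, the initial values
cancel and `e(s) = ‖z(s) - x(s)‖` satisfies `e ≤ a + (l_f + ξ) I^q e` with
`a = ε T^q / Γ(q + 1)` and `I^q` the Riemann–Liouville integral. Since `I^q` sends
`s^(kq) / Γ(kq + 1)` to `s^((k+1)q) / Γ((k+1)q + 1)` by Euler's Beta integral, iteration
yields the Mittag-Leffler series (`frac_gronwall`); its convergence also makes the remainder vanish.
-/

open scoped RealInnerProductSpace
open Set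

/-- Metric projection onto a set `C` of a real Hilbert space, characterized by the
variational inequality `⟪w - x, v - w⟫ ≥ 0` for all `v ∈ C`. -/
noncomputable def proj {H : Type*} [NormedAddCommGroup H] [InnerProductSpace ℝ H]
    (C : Set H) (x : H) : H :=
  letI : Nonempty H := ⟨0⟩
  Classical.epsilon fun w => w ∈ C ∧ ∀ v ∈ C, 0 ≤ ⟪w - x, v - w⟫

/-- The constant `L = (2 l_K²/η_G²)(l_G √(4l_G²+2η_G²) + 2l_G² + η_G²)`. -/
noncomputable def Lconst (lK lG ηG : ℝ) : ℝ :=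
  2 * lK ^ 2 / ηG ^ 2 * (lG * Real.sqrt (4 * lG ^ 2 + 2 * ηG ^ 2) + 2 * lG ^ 2 + ηG ^ 2)

/-- The constant `κ = 2 l_G (√(l_G²+η_G²/2)+l_G)² / (η_G² √(l_G²+η_G²/2))`. -/
noncomputable def kconst (lG ηG : ℝ) : ℝ :=
  2 * lG * (Real.sqrt (lG ^ 2 + ηG ^ 2 / 2) + lG) ^ 2 /
    (ηG ^ 2 * Real.sqrt (lG ^ 2 + ηG ^ 2 / 2))

/-- The constant `ξ = l_g (1 + √(κ/(1-L)))`. -/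
noncomputable def xiconst (lg lK lG ηG : ℝ) : ℝ :=
  lg * (1 + Real.sqrt (kconst lG ηG / (1 - Lconst lK lG ηG)))

/-- The Mittag-Leffler function `E_q(t) = ∑_{n=0}^∞ tⁿ/Γ(nq+1)`. -/
noncomputable def mlE (q t : ℝ) : ℝ := ∑' n : ℕ, t ^ n / Real.Gamma (n * q + 1)

/-- `(x, u)` is a solution of the nonlocal fractional differential quasi-variational
inequality (NFDQVI), in the integrated sense of Definition 2.4 of the paper. -/
def IsNFDQVISol {H₁ H₂ : Type*} [NormedAddCommGroup H₁] [InnerProductSpace ℝ H₁]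
    [NormedAddCommGroup H₂] [InnerProductSpace ℝ H₂]
    (T q : ℝ) (x₀ : H₁) (ψ : (ℝ → H₁) → H₁) (f : ℝ → H₁ → H₁)
    (g : ℝ → H₁ → H₂ → H₁) (G : ℝ → H₁ → H₂ → H₂) (Ω : Set H₂) (K : H₂ → Set H₂)
    (x : ℝ → H₁) (u : ℝ → H₂) : Prop :=
  ContinuousOn x (Icc 0 T) ∧ ContinuousOn u (Icc 0 T) ∧
  (∀ s ∈ Icc (0:ℝ) T, u s ∈ Ω) ∧
  (∀ s ∈ Icc (0:ℝ) T,
    x s = x₀ + ψ x + (Real.Gamma q)⁻¹ •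
      ∫ ζ in (0:ℝ)..s, ((s - ζ) ^ (q - 1)) • (f ζ (x ζ) + g ζ (x ζ) (u ζ))) ∧
  (∀ s ∈ Icc (0:ℝ) T, u s ∈ K (u s) ∧
    ∀ v ∈ K (u s), 0 ≤ ⟪G s (x s) (u s), v - u s⟫)

/-! ### The quasi-variational inequality -/

/-- The variational inequality defining `proj C x` is solvable for nonempty closed convex `C`. -/
lemma proj_spec {H : Type*} [NormedAddCommGroup H] [InnerProductSpace ℝ H] [CompleteSpace H]
    {C : Set H} (hne : C.Nonempty) (hcl : IsClosed C) (hcv : Convex ℝ C) (x : H) :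
    proj C x ∈ C ∧ ∀ v ∈ C, 0 ≤ ⟪proj C x - x, v - proj C x⟫ := by
  obtain ⟨w, hw, hmin⟩ := exists_norm_eq_iInf_of_complete_convex hne hcl.isComplete hcv x
  have hw' := (norm_eq_iInf_iff_real_inner_le_zero hcv hw).1 hmin
  have hex : ∃ w, w ∈ C ∧ ∀ v ∈ C, 0 ≤ ⟪w - x, v - w⟫ := by
    refine ⟨w, hw, fun v hv => ?_⟩
    have := hw' v hv
    rw [← neg_sub w x, inner_neg_left] at this
    linarith
  exact Classical.epsilon_spec hex

lemma proj_eq {H : Type*} [NormedAddCommGroup H] [InnerProductSpace ℝ H] [CompleteSpace H]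
    {C : Set H} (hcl : IsClosed C) (hcv : Convex ℝ C) {x w : H}
    (hw : w ∈ C) (hvi : ∀ v ∈ C, 0 ≤ ⟪w - x, v - w⟫) : proj C x = w := by
  obtain ⟨hp, hpv⟩ := proj_spec ⟨w, hw⟩ hcl hcv x
  have h1 := hpv w hw
  have h2 := hvi _ hp
  set p := proj C x
  have h3 : ⟪p - w, p - w⟫ = -(⟪p - x, w - p⟫ + ⟪w - x, p - w⟫) := by
    rw [← neg_sub p w, inner_neg_right, neg_add_eq_sub, ← inner_sub_left, ← inner_neg_left]
    congr 1
    abel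
  rw [← sub_eq_zero, ← inner_self_eq_zero (𝕜 := ℝ)]
  exact le_antisymm (by linarith) real_inner_self_nonneg

/-- Dependence on the parameter for the quasi-variational inequality, in linear form. For
`ρ > 0` the point `w = P_{K(u₁)}[u₂ - ρ F₂(u₂)]` lies within `l_K ‖u₁ - u₂‖` of
`u₂ = P_{K(u₂)}[u₂ - ρ F₂(u₂)]`, while strong pseudomonotonicity on `K(u₁)` bounds `‖w - u₁‖`;
the stated bound is the limit `ρ → ∞`. -/
lemma qvi_dist {H : Type*} [NormedAddCommGroup H] [InnerProductSpace ℝ H] [CompleteSpace H]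
    {Ω : Set H} {K : H → Set H}
    (hK : ∀ u ∈ Ω, (K u).Nonempty ∧ IsClosed (K u) ∧ Convex ℝ (K u) ∧ K u ⊆ Ω)
    {F₁ F₂ : H → H} {lG ηG lK δ : ℝ} (hlG : 0 < lG) (hηG : 0 < ηG) (hlK : 0 ≤ lK) (hδ : 0 ≤ δ)
    (hF : ∀ v ∈ Ω, ∀ w ∈ Ω, ‖F₁ w - F₂ v‖ ≤ lG * (δ + ‖w - v‖))
    (hpm : ∀ u ∈ Ω, ∀ u₁ ∈ K u, ∀ u₂ ∈ K u,
      0 ≤ ⟪F₁ u₂, u₁ - u₂⟫ → ηG * ‖u₁ - u₂‖ ^ 2 ≤ ⟪F₁ u₁, u₁ - u₂⟫)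
    (hKproj : ∀ u₁ ∈ Ω, ∀ u₂ ∈ Ω, ∀ ϖ : H,
      ‖proj (K u₂) ϖ - proj (K u₁) ϖ‖ ≤ lK * ‖u₂ - u₁‖)
    {u₁ u₂ : H} (hu₁ : u₁ ∈ Ω) (hu₂ : u₂ ∈ Ω)
    (hs₁ : u₁ ∈ K u₁ ∧ ∀ v ∈ K u₁, 0 ≤ ⟪F₁ u₁, v - u₁⟫)
    (hs₂ : u₂ ∈ K u₂ ∧ ∀ v ∈ K u₂, 0 ≤ ⟪F₂ u₂, v - u₂⟫) :
    ηG * ‖u₁ - u₂‖ ≤ (ηG + lG) * (lK * ‖u₁ - u₂‖) + lG * δ := by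
  set D := ‖u₁ - u₂‖ with hD
  have hD0 : 0 ≤ D := norm_nonneg _
  have key : ∀ ρ : ℝ, 0 < ρ → ηG * D ≤ (ηG + lG) * (lK * D) + lG * δ + lK * D / ρ := by
    intro ρ hρ
    obtain ⟨hne₁, hcl₁, hcv₁, hsub₁⟩ := hK u₁ hu₁
    obtain ⟨-, hcl₂, hcv₂, -⟩ := hK u₂ hu₂
    have hp₂ : proj (K u₂) (u₂ - ρ • F₂ u₂) = u₂ := by
      refine proj_eq hcl₂ hcv₂ hs₂.1 fun v hv => ?_
      rw [sub_sub_cancel, real_inner_smul_left]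
      exact mul_nonneg hρ.le (hs₂.2 v hv)
    obtain ⟨hw, hwv⟩ := proj_spec hne₁ hcl₁ hcv₁ (u₂ - ρ • F₂ u₂)
    have hwd := hKproj u₂ hu₂ u₁ hu₁ (u₂ - ρ • F₂ u₂)
    rw [hp₂] at hwd
    set w := proj (K u₁) (u₂ - ρ • F₂ u₂)
    have h1 := hpm u₁ hu₁ w hw u₁ hs₁.1 (hs₁.2 w hw)
    have h2 := hwv u₁ hs₁.1
    have h3 : ⟪w - (u₂ - ρ • F₂ u₂), u₁ - w⟫
        = ⟪u₂ - w, w - u₁⟫ - ρ * ⟪F₂ u₂, w - u₁⟫ := by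
      rw [← real_inner_smul_left, ← inner_sub_left, ← neg_sub w u₁, inner_neg_right,
        ← inner_neg_left]
      congr 1
      abel
    have h4 : ⟪F₁ w, w - u₁⟫ - ⟪F₂ u₂, w - u₁⟫ ≤ lG * (δ + ‖w - u₂‖) * ‖w - u₁‖ := by
      rw [← inner_sub_left]
      exact (real_inner_le_norm _ _).trans
        (mul_le_mul_of_nonneg_right (hF _ hu₂ _ (hsub₁ hw)) (norm_nonneg _))
    have h5 : ⟪u₂ - w, w - u₁⟫ ≤ ‖w - u₂‖ * ‖w - u₁‖ := by
      rw [norm_sub_rev w u₂]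
      exact real_inner_le_norm _ _
    have h6 : D ≤ ‖w - u₂‖ + ‖w - u₁‖ := by
      rw [hD, norm_sub_rev w u₁, add_comm]
      exact norm_sub_le_norm_sub_add_norm_sub _ _ _
    have hp0 := norm_nonneg (w - u₂)
    have hr0 := norm_nonneg (w - u₁)
    set p := ‖w - u₂‖
    set r := ‖w - u₁‖
    have h7 : ρ * (ηG * r ^ 2) ≤ ρ * (lG * (δ + p) * r) + p * r := by
      have := mul_le_mul_of_nonneg_left h1 hρ.le
      have := mul_le_mul_of_nonneg_left h4 hρ.le
      linarith
    have h8 : ηG * r ≤ lG * (δ + p) + p / ρ := by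
      rcases hr0.eq_or_lt with hr | hr
      · rw [← hr]; simp only [mul_zero]; positivity
      · have : (ηG * r) * (ρ * r) ≤ (lG * (δ + p) + p / ρ) * (ρ * r) := by
          have : (lG * (δ + p) + p / ρ) * (ρ * r) = ρ * (lG * (δ + p) * r) + p * r := by
            field_simp
          rw [this]; linarith
        exact le_of_mul_le_mul_right this (by positivity)
    have h9 : p / ρ ≤ lK * D / ρ := div_le_div_of_nonneg_right hwd hρ.le
    have h10 := mul_le_mul_of_nonneg_left hwd (add_pos hηG hlG).le
    have h11 := mul_le_mul_of_nonneg_left h6 hηG.le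
    linarith
  refine le_of_forall_pos_le_add fun e he => ?_
  have hk := key ((lK * D + 1) / e) (by positivity)
  have : lK * D / ((lK * D + 1) / e) ≤ e := by
    rw [div_div_eq_mul_div, div_le_iff₀ (by positivity)]
    nlinarith
  linarith

/-- The linear bound of `qvi_dist` implies the quadratic bound with the constants `L` and `κ`. -/
lemma dist_le_sqrt_kconst {lK lG ηG D δ : ℝ} (hlG : 0 < lG) (hηG : 0 < ηG)
    (hD : 0 ≤ D) (hδ : 0 ≤ δ) (hL : Lconst lK lG ηG < 1) (hlK : 0 ≤ lK)
    (h : ηG * D ≤ (ηG + lG) * (lK * D) + lG * δ) :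
    D ≤ Real.sqrt (kconst lG ηG / (1 - Lconst lK lG ηG)) * δ := by
  set a := Real.sqrt (lG ^ 2 + ηG ^ 2 / 2) with ha
  have ha0 : 0 < a := Real.sqrt_pos.2 (by positivity)
  have ha2 : a ^ 2 = lG ^ 2 + ηG ^ 2 / 2 := Real.sq_sqrt (by positivity)
  have hs : Real.sqrt (4 * lG ^ 2 + 2 * ηG ^ 2) = 2 * a := by
    refine (Real.sqrt_eq_iff_mul_self_eq_of_pos (by positivity)).2 ?_
    linear_combination 4 * ha2
  have hLe : ηG ^ 2 * Lconst lK lG ηG = 4 * a * (a + lG) * lK ^ 2 := by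
    rw [Lconst, hs]
    field_simp
    linear_combination -4 * lK ^ 2 * ha2
  have hke : a * (ηG ^ 2 * kconst lG ηG) = 2 * lG * (a + lG) ^ 2 := by
    rw [kconst, ← ha]
    field_simp
  set c := ηG + lG
  -- `N = 2 (a + l_G)² - l_G a` makes the `δ²`-coefficient of `N` times the quadratic form in
  -- `hquad` equal to `l_G N²`, so that a multiple of `(a c X - N δ)²` splits off.
  set N := 2 * a ^ 2 + 3 * lG * a + 2 * lG ^ 2 with hN
  have hN0 : 0 < N := by positivity
  set X := lK * D with hX
  have hX0 : 0 ≤ X := by positivity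
  have hc : c ^ 2 * (a + lG) ≤ 2 * a * N := by
    have : c ^ 2 ≤ 4 * a ^ 2 := by nlinarith [sq_nonneg (ηG - lG), sq_nonneg lG]
    have := mul_le_mul_of_nonneg_right this (by positivity : 0 ≤ a + lG)
    have : 0 ≤ lG * a ^ 2 := by positivity
    have : 0 ≤ lG ^ 2 * a := by positivity
    nlinarith
  have hquad : a * (c * X + lG * δ) ^ 2
      ≤ 4 * a ^ 2 * (a + lG) * X ^ 2 + 2 * lG * (a + lG) ^ 2 * δ ^ 2 := by
    have h1 : 0 ≤ 2 * a * (a + lG) * X ^ 2 * (2 * a * N - c ^ 2 * (a + lG)) :=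
      mul_nonneg (by positivity) (by linarith)
    have h2 : 0 ≤ lG * (a * c * X - N * δ) ^ 2 := by positivity
    have h3 : N * (4 * a ^ 2 * (a + lG) * X ^ 2 + 2 * lG * (a + lG) ^ 2 * δ ^ 2
        - a * (c * X + lG * δ) ^ 2) = 2 * a * (a + lG) * X ^ 2 * (2 * a * N - c ^ 2 * (a + lG))
          + lG * (a * c * X - N * δ) ^ 2 := by
      rw [hN]; ring
    have h4 := nonneg_of_mul_nonneg_right (h3 ▸ add_nonneg h1 h2) hN0
    linarith
  have hsq : (ηG * D) ^ 2 ≤ (c * X + lG * δ) ^ 2 :=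
    pow_le_pow_left₀ (by positivity) h 2
  have hfin : (1 - Lconst lK lG ηG) * D ^ 2 ≤ kconst lG ηG * δ ^ 2 := by
    have h1 := (mul_le_mul_of_nonneg_left hsq ha0.le).trans hquad
    have h2 : a * ηG ^ 2 * ((1 - Lconst lK lG ηG) * D ^ 2)
        ≤ a * ηG ^ 2 * (kconst lG ηG * δ ^ 2) := by
      have e1 : a * ηG ^ 2 * ((1 - Lconst lK lG ηG) * D ^ 2)
        = a * (ηG * D) ^ 2 - 4 * a ^ 2 * (a + lG) * X ^ 2 := by
        rw [hX]; linear_combination (-a * D ^ 2) * hLe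
      have e2 : a * ηG ^ 2 * (kconst lG ηG * δ ^ 2) = 2 * lG * (a + lG) ^ 2 * δ ^ 2 := by
        linear_combination δ ^ 2 * hke
      linarith
    exact le_of_mul_le_mul_left h2 (by positivity)
  have hL' : 0 < 1 - Lconst lK lG ηG := by linarith
  refine Real.le_sqrt_of_sq_le ?_ |>.trans ?_ (b := Real.sqrt
    (kconst lG ηG / (1 - Lconst lK lG ηG) * δ ^ 2))
  · rw [div_mul_eq_mul_div, le_div_iff₀ hL']
    linarith
  · rw [Real.sqrt_mul' _ (by positivity), Real.sqrt_sq hδ]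

/-! ### Fractional integrals and the Mittag-Leffler function -/

section Fractional

open MeasureTheory

/-- Euler's Beta integral over `[0, s]`, for real exponents. -/
lemma integral_sub_rpow_mul_rpow {q p s : ℝ} (hq : 0 < q) (hp : 0 ≤ p) (hs : 0 ≤ s) :
    ∫ ζ in (0:ℝ)..s, (s - ζ) ^ (q - 1) * ζ ^ p
      = Real.Gamma q * Real.Gamma (p + 1) / Real.Gamma (p + q + 1) * s ^ (p + q) := by
  rcases hs.eq_or_lt with rfl | hs
  · rw [intervalIntegral.integral_same, Real.zero_rpow (by positivity), mul_zero]
  have hB := Complex.betaIntegral_scaled ((p + 1 : ℝ) : ℂ) (q : ℂ) hs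
  have hl : ∫ x in (0:ℝ)..s, (x : ℂ) ^ (((p + 1 : ℝ) : ℂ) - 1) * ((s : ℂ) - x) ^ ((q : ℂ) - 1)
      = ((∫ ζ in (0:ℝ)..s, (s - ζ) ^ (q - 1) * ζ ^ p : ℝ) : ℂ) := by
    rw [← intervalIntegral.integral_ofReal]
    refine intervalIntegral.integral_congr fun x hx => ?_
    rw [uIcc_of_le hs.le] at hx
    rw [Complex.ofReal_mul, Complex.ofReal_cpow (by linarith [hx.2]), Complex.ofReal_cpow hx.1,
      mul_comm]
    push_cast
    rw [add_sub_cancel_right]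
  rw [hl, Complex.betaIntegral_eq_Gamma_mul_div _ _ (by simpa using by linarith) (by simpa using hq),
    ← Complex.ofReal_add, Complex.Gamma_ofReal, Complex.Gamma_ofReal, Complex.Gamma_ofReal,
    ← Complex.ofReal_one, ← Complex.ofReal_sub, ← Complex.ofReal_cpow hs.le] at hB
  have hB' : ∫ ζ in (0:ℝ)..s, (s - ζ) ^ (q - 1) * ζ ^ p
      = s ^ (p + 1 + q - 1) * (Real.Gamma (p + 1) * Real.Gamma q / Real.Gamma (p + 1 + q)) := by
    exact_mod_cast hB
  rw [hB', show p + 1 + q - 1 = p + q by ring, show p + 1 + q = p + q + 1 by ring]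
  ring

/-- A lower bound on `Γ` obtained by integrating only over `(R, ∞)`; it makes `Γ(nq + 1)` grow
faster than any geometric sequence. -/
lemma rpow_mul_exp_neg_le_Gamma {R p : ℝ} (hR : 0 ≤ R) (hp : 0 ≤ p) :
    R ^ p * Real.exp (-R) ≤ Real.Gamma (p + 1) := by
  have hint := Real.GammaIntegral_convergent (s := p + 1) (by linarith)
  have hsub : Ioi R ⊆ Ioi (0:ℝ) := Ioi_subset_Ioi hR
  rw [Real.Gamma_eq_integral (by linarith), ← integral_exp_neg_Ioi R,
    ← MeasureTheory.integral_const_mul]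
  refine le_trans (setIntegral_mono_on ((integrableOn_exp_neg_Ioi R).const_mul _)
    (hint.mono_set hsub) measurableSet_Ioi fun x hx => ?_)
    (setIntegral_mono_set hint ?_ hsub.eventuallyLE)
  · rw [add_sub_cancel_right, mul_comm]
    exact mul_le_mul_of_nonneg_left (Real.rpow_le_rpow hR (le_of_lt hx) hp) (Real.exp_pos _).le
  · refine (ae_restrict_mem measurableSet_Ioi).mono fun x hx => ?_
    have : (0:ℝ) < x := hx
    change 0 ≤ Real.exp (-x) * x ^ (p + 1 - 1)
    positivity

lemma summable_mlE {q t : ℝ} (hq : 0 < q) (ht : 0 ≤ t) :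
    Summable fun n : ℕ => t ^ n / Real.Gamma (n * q + 1) := by
  -- With `R ^ q = 2 t + 1`, the bound `Γ(nq + 1) ≥ R ^ (nq) e⁻ᴿ` gives a geometric majorant.
  set R := (2 * t + 1) ^ q⁻¹ with hRdef
  have hR : 0 ≤ R := by positivity
  have hRq : R ^ q = 2 * t + 1 := Real.rpow_inv_rpow (by positivity) hq.ne'
  have hlt : t / (2 * t + 1) < 1 := by rw [div_lt_one (by positivity)]; linarith
  refine Summable.of_nonneg_of_le (fun n => ?_) (fun n => ?_)
    ((summable_geometric_of_lt_one (by positivity) hlt).mul_right (Real.exp R))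
  · have : 0 < Real.Gamma (n * q + 1) := Real.Gamma_pos_of_pos (by positivity)
    positivity
  · have h := rpow_mul_exp_neg_le_Gamma hR (by positivity : 0 ≤ (n:ℝ) * q)
    rw [mul_comm (n:ℝ) q, Real.rpow_mul_natCast hR, hRq, mul_comm q] at h
    calc t ^ n / Real.Gamma (n * q + 1) ≤ t ^ n / ((2 * t + 1) ^ n * Real.exp (-R)) :=
          div_le_div_of_nonneg_left (by positivity) (by positivity) h
      _ = (t / (2 * t + 1)) ^ n * Real.exp R := by
          rw [Real.exp_neg, div_pow]; field_simp

lemma intervalIntegrable_kernel {q : ℝ} (hq : 0 < q) (s : ℝ) :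
    IntervalIntegrable (fun ζ : ℝ => (s - ζ) ^ (q - 1)) volume 0 s := by
  have h := (intervalIntegral.intervalIntegrable_rpow' (a := 0) (b := s)
    (r := q - 1) (by linarith)).comp_sub_left s
  simpa using h.symm

/-- Gronwall's inequality for the Riemann–Liouville integral `I^q` with a constant forcing term:
iterating `e ≤ a + lam I^q e` produces the partial sums of the Mittag-Leffler series, with a
remainder `M lam ^ n s ^ (nq) / Γ(nq + 1)`. -/
lemma frac_gronwall {T q a lam : ℝ} (hq : 0 < q) (hlam : 0 ≤ lam) {e : ℝ → ℝ}
    (hec : ContinuousOn e (Icc 0 T))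
    (he : ∀ s ∈ Icc (0:ℝ) T, e s ≤ a + lam * ((Real.Gamma q)⁻¹ *
      ∫ ζ in (0:ℝ)..s, (s - ζ) ^ (q - 1) * e ζ)) :
    ∀ s ∈ Icc (0:ℝ) T, e s ≤ a * mlE q (lam * s ^ q) := by
  have hG := Real.Gamma_pos_of_pos hq
  obtain ⟨M, hM⟩ := (isCompact_Icc.image_of_continuousOn hec).bddAbove
  set r : ℕ → ℝ → ℝ := fun k s => lam ^ k / Real.Gamma (k * q + 1) * s ^ ((k:ℝ) * q) with hr
  have hrc : ∀ k, Continuous (r k) := fun k =>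
    continuous_const.mul (Real.continuous_rpow_const (by positivity))
  have hrI : ∀ k, ∀ s, 0 ≤ s → lam * ((Real.Gamma q)⁻¹ *
      ∫ ζ in (0:ℝ)..s, (s - ζ) ^ (q - 1) * r k ζ) = r (k + 1) s := by
    intro k s hs
    have h1 : ∀ ζ : ℝ, (s - ζ) ^ (q - 1) * r k ζ = lam ^ k / Real.Gamma (k * q + 1) *
        ((s - ζ) ^ (q - 1) * ζ ^ ((k:ℝ) * q)) := fun ζ => by simp only [hr]; ring
    simp_rw [h1]
    rw [intervalIntegral.integral_const_mul, integral_sub_rpow_mul_rpow hq (by positivity) hs]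
    have h2 : 0 < Real.Gamma (k * q + 1) := Real.Gamma_pos_of_pos (by positivity)
    simp only [hr]
    push_cast
    rw [show ((k:ℝ) + 1) * q = k * q + q by ring, pow_succ]
    field_simp
  have hiter : ∀ n : ℕ, ∀ s ∈ Icc (0:ℝ) T,
      e s ≤ (∑ k ∈ Finset.range n, a * r k s) + M * r n s := by
    intro n
    induction n with
    | zero =>
      intro s hs
      simpa [hr] using hM (mem_image_of_mem e hs)
    | succ n ih =>
      intro s hs
      have hk := intervalIntegrable_kernel hq s
      have hint : ∀ k, IntervalIntegrable (fun ζ => (s - ζ) ^ (q - 1) * r k ζ) volume 0 s :=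
        fun k => hk.mul_continuousOn (hrc k).continuousOn
      have hsumint : IntervalIntegrable
          (fun ζ => ∑ k ∈ Finset.range n, a * ((s - ζ) ^ (q - 1) * r k ζ)) volume 0 s := by
        have := IntervalIntegrable.sum (Finset.range n) fun k _ => (hint k).const_mul a
        simpa only [Finset.sum_fn] using this
      have hle : ∫ ζ in (0:ℝ)..s, (s - ζ) ^ (q - 1) * e ζ ≤
          ∫ ζ in (0:ℝ)..s, ((∑ k ∈ Finset.range n, a * ((s - ζ) ^ (q - 1) * r k ζ))
            + M * ((s - ζ) ^ (q - 1) * r n ζ)) := by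
        refine intervalIntegral.integral_mono_on hs.1 (hk.mul_continuousOn ?_) ?_ fun ζ hζ => ?_
        · rw [uIcc_of_le hs.1]
          exact hec.mono (Icc_subset_Icc_right hs.2)
        · refine IntervalIntegrable.add ?_ ((hint n).const_mul M)
          exact hsumint
        · refine (mul_le_mul_of_nonneg_left (ih ζ ⟨hζ.1, hζ.2.trans hs.2⟩)
            (Real.rpow_nonneg (sub_nonneg.2 hζ.2) _)).trans (le_of_eq ?_)
          rw [mul_add, Finset.mul_sum]
          congr 1
          · exact Finset.sum_congr rfl fun k _ => by ring
          · ring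
      have hcomp : lam * ((Real.Gamma q)⁻¹ *
          ∫ ζ in (0:ℝ)..s, ((∑ k ∈ Finset.range n, a * ((s - ζ) ^ (q - 1) * r k ζ))
            + M * ((s - ζ) ^ (q - 1) * r n ζ)))
          = (∑ k ∈ Finset.range n, a * r (k + 1) s) + M * r (n + 1) s := by
        rw [intervalIntegral.integral_add ?_ ((hint n).const_mul M),
          intervalIntegral.integral_finsetSum fun k _ => (hint k).const_mul a]
        · simp_rw [intervalIntegral.integral_const_mul]
          rw [← hrI n s hs.1, mul_add, mul_add, Finset.mul_sum, Finset.mul_sum]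
          congr 1
          · refine Finset.sum_congr rfl fun k _ => ?_
            rw [← hrI k s hs.1]
            ring
          · ring
        · exact hsumint
      have h0 : a * r 0 s = a := by simp [hr]
      rw [Finset.sum_range_succ', h0]
      have h1 := he s hs
      have h2 := mul_le_mul_of_nonneg_left
        (mul_le_mul_of_nonneg_left hle (inv_nonneg.2 hG.le)) hlam
      rw [hcomp] at h2
      linarith
  intro s hs
  have hrs : ∀ k, r k s = (lam * s ^ q) ^ k / Real.Gamma (k * q + 1) := by
    intro k
    simp only [hr]
    rw [mul_pow, mul_comm (k:ℝ) q, Real.rpow_mul_natCast hs.1]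
    ring
  have hsum : Summable fun k => r k s := by
    simp_rw [hrs]
    exact summable_mlE hq (mul_nonneg hlam (Real.rpow_nonneg hs.1 _))
  have hlim := ((hsum.mul_left a).hasSum.tendsto_sum_nat).add
    (hsum.tendsto_atTop_zero.const_mul M)
  have := ge_of_tendsto' hlim fun n => hiter n s hs
  rw [tsum_mul_left, mul_zero, add_zero] at this
  simpa only [mlE, hrs] using this

end Fractional

/-! ### Stability -/

/-- Theorem 4.1: Mittag-Leffler-Hyers-Ulam stability of the NFDQVI. -/
theorem nfdqvi_mlhu_stability
    {H₁ H₂ : Type*} [NormedAddCommGroup H₁] [InnerProductSpace ℝ H₁] [CompleteSpace H₁]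
    [NormedAddCommGroup H₂] [InnerProductSpace ℝ H₂] [CompleteSpace H₂]
    (T : ℝ) (hT : 0 < T) (q : ℝ) (hq : q ∈ Ioc (0:ℝ) 1) (x₀ : H₁)
    (Ω : Set H₂) (hΩne : Ω.Nonempty) (hΩcl : IsClosed Ω) (hΩcv : Convex ℝ Ω)
    (K : H₂ → Set H₂)
    (hK : ∀ u ∈ Ω, (K u).Nonempty ∧ IsClosed (K u) ∧ Convex ℝ (K u) ∧ K u ⊆ Ω)
    (G : ℝ → H₁ → H₂ → H₂) (lG ηG : ℝ) (hlG : 0 < lG) (hηG : 0 < ηG)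
    -- (H₁)
    (hGLip : ∀ s₁ ∈ Icc (0:ℝ) T, ∀ s₂ ∈ Icc (0:ℝ) T, ∀ (x₁ x₂ : H₁), ∀ u₁ ∈ Ω, ∀ u₂ ∈ Ω,
      ‖G s₂ x₂ u₂ - G s₁ x₁ u₁‖ ≤ lG * (|s₂ - s₁| + ‖x₂ - x₁‖ + ‖u₂ - u₁‖))
    (hGpm : ∀ s ∈ Icc (0:ℝ) T, ∀ (x : H₁), ∀ u ∈ Ω, ∀ u₁ ∈ K u, ∀ u₂ ∈ K u,
      0 ≤ ⟪G s x u₂, u₁ - u₂⟫ → ηG * ‖u₁ - u₂‖ ^ 2 ≤ ⟪G s x u₁, u₁ - u₂⟫)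
    -- (H₂)
    (lK : ℝ) (hlK : 0 ≤ lK)
    (hKproj : ∀ u₁ ∈ Ω, ∀ u₂ ∈ Ω, ∀ ϖ : H₂,
      ‖proj (K u₂) ϖ - proj (K u₁) ϖ‖ ≤ lK * ‖u₂ - u₁‖)
    -- (H₃)
    (g : ℝ → H₁ → H₂ → H₁) (lg : ℝ) (hlg : 0 < lg)
    (hgc : ContinuousOn (fun p : ℝ × H₁ × H₂ => g p.1 p.2.1 p.2.2)
      (Icc (0:ℝ) T ×ˢ (univ : Set (H₁ × H₂))))
    (hgLip : ∀ s ∈ Icc (0:ℝ) T, ∀ (x₁ x₂ : H₁) (u₁ u₂ : H₂),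
      ‖g s x₂ u₂ - g s x₁ u₁‖ ≤ lg * (‖x₂ - x₁‖ + ‖u₂ - u₁‖))
    -- (H₄)
    (f : ℝ → H₁ → H₁) (lf : ℝ) (hlf : 0 < lf)
    (hfc : ContinuousOn (fun p : ℝ × H₁ => f p.1 p.2) (Icc (0:ℝ) T ×ˢ (univ : Set H₁)))
    (hfLip : ∀ s ∈ Icc (0:ℝ) T, ∀ x₁ x₂ : H₁, ‖f s x₂ - f s x₁‖ ≤ lf * ‖x₂ - x₁‖)
    -- (H₅')
    (ψ : (ℝ → H₁) → H₁) (γ lψ : ℝ) (hγ : 0 < γ) (hlψ0 : 0 < lψ) (hlψ1 : lψ < 1)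
    (hψLip : ∀ y₁ y₂ : ℝ → H₁, ContinuousOn y₁ (Icc 0 T) → ContinuousOn y₂ (Icc 0 T) →
      ‖ψ y₂ - ψ y₁‖ ≤ lψ * sSup ((fun s => Real.exp (-(γ * s)) * ‖y₂ s - y₁ s‖) '' Icc 0 T))
    (hsmall : lψ + (lf + xiconst lg lK lG ηG) / Real.Gamma q *
      sSup ((fun s => ∫ ζ in (0:ℝ)..s, (s - ζ) ^ (q - 1) * Real.exp (-(γ * (s - ζ)))) ''
        Icc (0:ℝ) T) < 1)
    -- L < 1
    (hL : Lconst lK lG ηG < 1)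
    -- (x, u) is the (unique) solution of the NFDQVI
    (x : ℝ → H₁) (u : ℝ → H₂) (hxu : IsNFDQVISol T q x₀ ψ f g G Ω K x u)
    -- (z, υ, h): solution of the perturbed inequality system
    (z : ℝ → H₁) (hz : ContinuousOn z (Icc 0 T))
    (υ : ℝ → H₂) (hυc : ContinuousOn υ (Icc 0 T)) (hυΩ : ∀ s ∈ Icc (0:ℝ) T, υ s ∈ Ω)
    (h : ℝ → H₁) (hhc : ContinuousOn h (Icc 0 T))
    (hzeq : ∀ s ∈ Icc (0:ℝ) T,
      z s = z 0 + (Real.Gamma q)⁻¹ •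
        ∫ ζ in (0:ℝ)..s, ((s - ζ) ^ (q - 1)) • (f ζ (z ζ) + g ζ (z ζ) (υ ζ) + h ζ))
    (hυ : ∀ s ∈ Icc (0:ℝ) T, υ s ∈ K (υ s) ∧
      ∀ v ∈ K (υ s), 0 ≤ ⟪G s (z s) (υ s), v - υ s⟫)
    (hz0 : z 0 = x₀ + ψ x)
    (ε : ℝ) (hε : 0 < ε) (hh : ∀ s ∈ Icc (0:ℝ) T, ‖h s‖ ≤ ε) :
    ∀ s ∈ Icc (0:ℝ) T,
      ‖z s - x s‖ ≤ T ^ q / Real.Gamma (q + 1) * ε *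
        mlE q ((lf + xiconst lg lK lG ηG) * s ^ q) := by
  obtain ⟨hxc, huc, huΩ, hxeq, huK⟩ := hxu
  have hq0 : 0 < q := hq.1
  have hG := Real.Gamma_pos_of_pos hq0
  set ξ := xiconst lg lK lG ηG with hξ
  have hξ0 : 0 ≤ ξ := by rw [hξ, xiconst]; positivity
  have hdist : ∀ s ∈ Icc (0:ℝ) T, ‖υ s - u s‖ ≤
      Real.sqrt (kconst lG ηG / (1 - Lconst lK lG ηG)) * ‖z s - x s‖ := by
    intro s hs
    refine dist_le_sqrt_kconst hlG hηG (norm_nonneg _) (norm_nonneg _) hL hlK ?_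
    refine qvi_dist hK (F₁ := G s (z s)) (F₂ := G s (x s)) hlG hηG hlK (norm_nonneg _)
      (fun v hv w hw => ?_) (hGpm s hs (z s)) hKproj (hυΩ s hs) (huΩ s hs) (hυ s hs) (huK s hs)
    simpa using hGLip s hs s hs (x s) (z s) v hv w hw
  have hdc : ContinuousOn (fun s => ‖z s - x s‖) (Icc 0 T) := (hz.sub hxc).norm
  refine frac_gronwall hq0 (by positivity) hdc fun s hs => ?_
  have hsub : uIcc 0 s ⊆ Icc 0 T := by
    rw [uIcc_of_le hs.1]; exact Icc_subset_Icc_right hs.2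
  have hk := intervalIntegrable_kernel hq0 s
  have hfz : ∀ {y : ℝ → H₁}, ContinuousOn y (Icc 0 T) →
      ContinuousOn (fun ζ => f ζ (y ζ)) (Icc 0 T) := fun hy =>
    hfc.comp (continuousOn_id.prodMk hy) fun ζ hζ => ⟨hζ, mem_univ _⟩
  have hgz : ∀ {y : ℝ → H₁} {w : ℝ → H₂}, ContinuousOn y (Icc 0 T) → ContinuousOn w (Icc 0 T) →
      ContinuousOn (fun ζ => g ζ (y ζ) (w ζ)) (Icc 0 T) := fun hy hw =>
    hgc.comp (continuousOn_id.prodMk (hy.prodMk hw)) fun ζ hζ => ⟨hζ, mem_univ _⟩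
  have hdiff : z s - x s = (Real.Gamma q)⁻¹ • ∫ ζ in (0:ℝ)..s, ((s - ζ) ^ (q - 1)) •
      ((f ζ (z ζ) + g ζ (z ζ) (υ ζ) + h ζ) - (f ζ (x ζ) + g ζ (x ζ) (u ζ))) := by
    have hi₁ : IntervalIntegrable
        (fun ζ => ((s - ζ) ^ (q - 1)) • (f ζ (z ζ) + g ζ (z ζ) (υ ζ) + h ζ))
        MeasureTheory.volume 0 s :=
      hk.smul_continuousOn ((((hfz hz).add (hgz hz hυc)).add hhc).mono hsub)
    have hi₂ : IntervalIntegrable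
        (fun ζ => ((s - ζ) ^ (q - 1)) • (f ζ (x ζ) + g ζ (x ζ) (u ζ)))
        MeasureTheory.volume 0 s :=
      hk.smul_continuousOn (((hfz hxc).add (hgz hxc huc)).mono hsub)
    simp_rw [smul_sub]
    rw [intervalIntegral.integral_sub hi₁ hi₂, smul_sub, hzeq s hs, hxeq s hs, hz0]
    abel
  have hbound : ‖∫ ζ in (0:ℝ)..s, ((s - ζ) ^ (q - 1)) •
      ((f ζ (z ζ) + g ζ (z ζ) (υ ζ) + h ζ) - (f ζ (x ζ) + g ζ (x ζ) (u ζ)))‖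
      ≤ ∫ ζ in (0:ℝ)..s, ((lf + ξ) * ((s - ζ) ^ (q - 1) * ‖z ζ - x ζ‖)
          + ε * (s - ζ) ^ (q - 1)) := by
    refine intervalIntegral.norm_integral_le_of_norm_le hs.1 (Filter.Eventually.of_forall ?_)
      (((hk.mul_continuousOn (hdc.mono hsub)).const_mul _).add (hk.const_mul _))
    intro ζ hζ
    have hζ' : ζ ∈ Icc (0:ℝ) T := ⟨hζ.1.le, hζ.2.trans hs.2⟩
    have hk0 : 0 ≤ (s - ζ) ^ (q - 1) := Real.rpow_nonneg (sub_nonneg.2 hζ.2) _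
    rw [norm_smul, Real.norm_of_nonneg hk0]
    have h1 := hfLip ζ hζ' (x ζ) (z ζ)
    have h2 := hgLip ζ hζ' (x ζ) (z ζ) (u ζ) (υ ζ)
    have h3 := mul_le_mul_of_nonneg_left (hdist ζ hζ') hlg.le
    have h4 := hh ζ hζ'
    have h5 : ‖(f ζ (z ζ) + g ζ (z ζ) (υ ζ) + h ζ) - (f ζ (x ζ) + g ζ (x ζ) (u ζ))‖
        ≤ ‖f ζ (z ζ) - f ζ (x ζ)‖ + ‖g ζ (z ζ) (υ ζ) - g ζ (x ζ) (u ζ)‖ + ‖h ζ‖ := by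
      rw [show (f ζ (z ζ) + g ζ (z ζ) (υ ζ) + h ζ) - (f ζ (x ζ) + g ζ (x ζ) (u ζ))
        = (f ζ (z ζ) - f ζ (x ζ)) + (g ζ (z ζ) (υ ζ) - g ζ (x ζ) (u ζ)) + h ζ by abel]
      exact norm_add₃_le
    have h6 : ‖(f ζ (z ζ) + g ζ (z ζ) (υ ζ) + h ζ) - (f ζ (x ζ) + g ζ (x ζ) (u ζ))‖
        ≤ (lf + ξ) * ‖z ζ - x ζ‖ + ε := by
      rw [hξ, xiconst]
      linarith
    refine (mul_le_mul_of_nonneg_left h6 hk0).trans (le_of_eq ?_)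
    ring
  have hforce : (Real.Gamma q)⁻¹ * ∫ ζ in (0:ℝ)..s, ε * (s - ζ) ^ (q - 1)
      ≤ T ^ q / Real.Gamma (q + 1) * ε := by
    have hB := integral_sub_rpow_mul_rpow hq0 le_rfl hs.1
    simp only [Real.rpow_zero, mul_one, zero_add, Real.Gamma_one] at hB
    rw [intervalIntegral.integral_const_mul, hB]
    have hG1 : 0 < Real.Gamma (q + 1) := Real.Gamma_pos_of_pos (by positivity)
    have hle : s ^ q ≤ T ^ q := Real.rpow_le_rpow hs.1 hs.2 hq0.le
    calc (Real.Gamma q)⁻¹ * (ε * (Real.Gamma q / Real.Gamma (q + 1) * s ^ q))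
        = s ^ q / Real.Gamma (q + 1) * ε := by field_simp
      _ ≤ T ^ q / Real.Gamma (q + 1) * ε := by gcongr
  have hsplit := intervalIntegral.integral_add (μ := MeasureTheory.volume)
    ((hk.mul_continuousOn (hdc.mono hsub)).const_mul (lf + ξ)) (hk.const_mul ε)
  rw [intervalIntegral.integral_const_mul (lf + ξ)] at hsplit
  rw [hsplit] at hbound
  have hmul := mul_le_mul_of_nonneg_left hbound (inv_nonneg.2 hG.le)
  rw [mul_add] at hmul
  rw [hdiff, norm_smul, Real.norm_of_nonneg (inv_nonneg.2 hG.le)]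
  linarith
end

section
/- Let n ≥ 1 and, for each j = 1,…,n, let K_j be a map from ℝ^{n−1} to nonempty closed convex subsets of ℝ, and set K(v) := Π_{j=1}^n K_j(v_{−j}) for v ∈ ℝⁿ, where v_{−j} ∈ ℝ^{n−1} is v with its j-th coordinate removed. For each j, let Θ_j : ℝⁿ × ℝⁿ → ℝ be such that, for every y ∈ ℝⁿ and every v_{−j} ∈ ℝ^{n−1}, the map v_j ↦ Θ_j(y, (v_j, v_{−j})) is convex and continuously differentiable, and define G : I × ℝⁿ × ℝⁿ → ℝⁿ by G(s, y, v)_j := ∂Θ_j(y,v)/∂v_j. Let f_j : I × ℝ → ℝ, g_j : I × ℝ × ℝ → ℝ, x_{0j}, a_j ∈ ℝ. Then a pair (x*, u*) ∈ C(I,ℝⁿ) × C(I,ℝⁿ) is a general Nash equilibrium of the multi-agent optimization problem — i.e., for every j and every s ∈ I: x_j*(s) = x_{0j} + a_j·(1/T)∫₀^T x_j*(ζ)dζ + (1/Γ(q))∫₀^s(s−ζ)^{q−1}[f_j(ζ,x_j*(ζ)) + g_j(ζ,x_j*(ζ),u_j*(ζ))]dζ, u_j*(s) ∈ K_j(u*_{−j}(s)),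 and Θ_j(x*(s), (u_j, u*_{−j}(s))) ≥ Θ_j(x*(s), u*(s)) for all u_j ∈ K_j(u*_{−j}(s)) — if and only if (x*, u*) satisfies: the same integral equations for x*, and for every s ∈ I, u*(s) ∈ K(u*(s)) with ⟨G(s, x*(s), u*(s)), v − u*(s)⟩ ≥ 0 for all v ∈ K(u*(s)). -/
open Set

/-!
The integral equations are the same on both sides, so everything happens at a fixed time `s`.
There, each agent minimizes a convex differentiable function of one real variable over a convex
set, and such a minimum is characterized by its first-order variational inequality
(`ConvexOn.forall_le_iff_forall_deriv_mul_nonneg`). The `n` scalar inequalities are equivalent to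
the single summed inequality because the constraint set at `u s` is a product: summing gives one
direction, and testing with a vector that differs from `u s` in a single coordinate gives the other
(`forall_sum_mul_sub_nonneg_iff`).
-/

/-- A convex function on the line lies above its tangent at `a`. -/
lemma ConvexOn.deriv_mul_sub_le_sub {h : ℝ → ℝ} (hc : ConvexOn ℝ univ h)
    {a : ℝ} (hd : DifferentiableAt ℝ h a) (w : ℝ) :
    deriv h a * (w - a) ≤ h w - h a := by
  rcases lt_trichotomy a w with haw | rfl | hwa
  · have := hc.deriv_le_slope (mem_univ a) (mem_univ w) haw hd
    rwa [slope_def_field, le_div_iff₀ (sub_pos.2 haw)] at this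
  · simp
  · have := hc.slope_le_deriv (mem_univ w) (mem_univ a) hwa hd
    rw [slope_def_field, div_le_iff₀ (sub_pos.2 hwa)] at this
    linarith

/-- First-order characterization of the minimizers of a convex function over a convex set. -/
lemma ConvexOn.forall_le_iff_forall_deriv_mul_nonneg {h : ℝ → ℝ} (hc : ConvexOn ℝ univ h)
    {S : Set ℝ} (hS : Convex ℝ S) {a : ℝ} (hd : DifferentiableAt ℝ h a) (ha : a ∈ S) :
    (∀ w ∈ S, h a ≤ h w) ↔ ∀ w ∈ S, 0 ≤ deriv h a * (w - a) := by
  refine ⟨fun hmin w hw => ?_, fun hvi w hw => ?_⟩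
  · have hloc : IsLocalMinOn h S a := IsMinOn.localize hmin
    have := hloc.hasFDerivWithinAt_nonneg hd.hasDerivAt.hasFDerivAt.hasFDerivWithinAt
      (sub_mem_posTangentConeAt_of_segment_subset (hS.segment_subset ha hw))
    simpa [mul_comm] using this
  · linarith [hvi w hw, hc.deriv_mul_sub_le_sub hd w]

/-- A variational inequality over a product set decouples into its coordinates. -/
lemma forall_sum_mul_sub_nonneg_iff {ι : Type*} [Fintype ι] [DecidableEq ι] {S : ι → Set ℝ}
    {c z : ι → ℝ} (hz : ∀ j, z j ∈ S j) :
    (∀ v : ι → ℝ, (∀ j, v j ∈ S j) → 0 ≤ ∑ j, c j * (v j - z j)) ↔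
      ∀ j, ∀ w ∈ S j, 0 ≤ c j * (w - z j) := by
  refine ⟨fun hvi j w hw => ?_, fun hvi v hv => Finset.sum_nonneg fun j _ => hvi j _ (hv j)⟩
  have hmem : ∀ i, Function.update z j w i ∈ S i := by
    intro i
    rcases eq_or_ne i j with rfl | hij
    · simpa using hw
    · simpa [hij] using hz i
  have hsum := hvi _ hmem
  rw [Finset.sum_eq_single j (fun i _ hij => by simp [hij]) (by simp)] at hsum
  simpa using hsum

/-- Theorem 5.1: a pair `(x*, u*)` is a general Nash equilibrium of the time-dependent
multi-agent optimization problem if and only if it solves the associated NFDQVI, where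
`G(s,y,v)_j = ∂Θ_j(y,v)/∂v_j` and `K(v) = Π_j K_j(v_{−j})`.  The fractional dynamics with
nonlocal initial condition is encoded in its integrated form. -/
theorem maop_nash_iff_nfdqvi (T : ℝ) (hT : 0 < T) (q : ℝ) (hq : q ∈ Ioc (0:ℝ) 1)
    (n : ℕ) (hn : 0 < n)
    -- constraint maps K_j : ℝ^{n-1} → 2^ℝ with nonempty closed convex values
    (K : (j : Fin n) → ({i : Fin n // i ≠ j} → ℝ) → Set ℝ)
    (hK : ∀ j v, (K j v).Nonempty ∧ IsClosed (K j v) ∧ Convex ℝ (K j v))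
    -- cost functions, convex and continuously differentiable in the own strategy
    (Θ : Fin n → (Fin n → ℝ) → (Fin n → ℝ) → ℝ)
    (hΘconv : ∀ j y v, ConvexOn ℝ univ (fun t => Θ j y (Function.update v j t)))
    (hΘdiff : ∀ j y v, ContDiff ℝ 1 (fun t => Θ j y (Function.update v j t)))
    -- G(s,y,v)_j = ∂Θ_j(y,v)/∂v_j
    (G : ℝ → (Fin n → ℝ) → (Fin n → ℝ) → Fin n → ℝ)
    (hG : ∀ s y v j, G s y v j = deriv (fun t => Θ j y (Function.update v j t)) (v j))
    -- dynamics and nonlocal data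
    (f : Fin n → ℝ → ℝ → ℝ) (g : Fin n → ℝ → ℝ → ℝ → ℝ) (x₀ a : Fin n → ℝ)
    -- the candidate pair
    (x u : ℝ → Fin n → ℝ)
    (hx : ContinuousOn x (Icc 0 T)) (hu : ContinuousOn u (Icc 0 T)) :
    -- general Nash equilibrium
    ((∀ j, ∀ s ∈ Icc (0:ℝ) T,
        x s j = x₀ j + a j * ((1 / T) * ∫ ζ in (0:ℝ)..T, x ζ j) +
          (Real.Gamma q)⁻¹ * ∫ ζ in (0:ℝ)..s,
            (s - ζ) ^ (q - 1) * (f j ζ (x ζ j) + g j ζ (x ζ j) (u ζ j))) ∧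
      (∀ j, ∀ s ∈ Icc (0:ℝ) T,
        u s j ∈ K j (fun i => u s i.1) ∧
        ∀ w ∈ K j (fun i => u s i.1),
          Θ j (x s) (u s) ≤ Θ j (x s) (Function.update (u s) j w)))
    ↔
    -- solution of the NFDQVI
    ((∀ j, ∀ s ∈ Icc (0:ℝ) T,
        x s j = x₀ j + a j * ((1 / T) * ∫ ζ in (0:ℝ)..T, x ζ j) +
          (Real.Gamma q)⁻¹ * ∫ ζ in (0:ℝ)..s,
            (s - ζ) ^ (q - 1) * (f j ζ (x ζ j) + g j ζ (x ζ j) (u ζ j))) ∧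
      (∀ s ∈ Icc (0:ℝ) T,
        (∀ j, u s j ∈ K j (fun i => u s i.1)) ∧
        ∀ v : Fin n → ℝ, (∀ j, v j ∈ K j (fun i => u s i.1)) →
          0 ≤ ∑ j, G s (x s) (u s) j * (v j - u s j))) := by
  have key : ∀ s, (∀ j, u s j ∈ K j (fun i => u s i.1)) →
      ((∀ j, ∀ w ∈ K j (fun i => u s i.1),
          Θ j (x s) (u s) ≤ Θ j (x s) (Function.update (u s) j w)) ↔
        ∀ v : Fin n → ℝ, (∀ j, v j ∈ K j (fun i => u s i.1)) →
          0 ≤ ∑ j, G s (x s) (u s) j * (v j - u s j)) := by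
    intro s hs
    rw [forall_sum_mul_sub_nonneg_iff hs]
    refine forall_congr' fun j => ?_
    have hopt := (hΘconv j (x s) (u s)).forall_le_iff_forall_deriv_mul_nonneg
      (hK j (fun i => u s i.1)).2.2
      ((hΘdiff j (x s) (u s)).differentiable one_ne_zero (u s j)) (hs j)
    simpa only [hG, Function.update_eq_self] using hopt
  refine and_congr_right fun _ => ⟨fun h s hs => ?_, fun h j s hs => ?_⟩
  · have hmem := fun j => (h j s hs).1
    exact ⟨hmem, (key s hmem).1 fun j => (h j s hs).2⟩
  · obtain ⟨hmem, hvi⟩ := h s hs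
    exact ⟨hmem j, (key s hmem).2 hvi j⟩
end

section
/- Let T > 0, n ≥ 1, and a₁,…,a_n ∈ ℝ with 0 < max_j |a_j| < 1. Define ψ : C([0,T],ℝⁿ) → ℝⁿ by ψ(x)_j := a_j·(1/T)·∫₀^T x_j(ζ) dζ, and equip ℝⁿ with the ℓ¹-norm ‖y‖₁ = Σ_j |y_j|. Then: (i) for every γ > 0 and all y¹, y² ∈ C([0,T],ℝⁿ), ‖ψ(y²) − ψ(y¹)‖₁ ≤ max_j|a_j|·((e^{γT}−1)/(γT))·max_{s∈[0,T]} e^{−γs}‖y²(s) − y¹(s)‖₁; and (ii) there exists γ ∈ (0, (1/T)·ln(1/max_j|a_j|)] such that max_j|a_j|·(e^{γT}−1)/(γT) < 1. -/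
open Set

/-!
The Bielecki estimate follows from the pointwise bound `‖y(s)‖₁ ≤ e^{γs} M`, where `M` is the Bielecki
norm of `y = y₂ - y₁`: integrating over `[0,T]` gives `∫ ‖y‖₁ ≤ M (e^{γT} - 1)/γ`, and each
coordinate of the nonlocal term is bounded by `A/T` times `∫ |y_j|`.

For the contraction claim the right endpoint `γ = (1/T) log (1/A)` itself works: there
`e^{γT} = 1/A`, so the constant equals `(1 - A)/log (1/A)`, which is `< 1` by the strict inequality
`log A < A - 1`.
-/

lemma integral_exp_mul (T γ : ℝ) (hγ : γ ≠ 0) :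
    ∫ s in (0:ℝ)..T, Real.exp (γ * s) = (Real.exp (γ * T) - 1) / γ := by
  rw [intervalIntegral.integral_comp_mul_left (fun s => Real.exp s) hγ, integral_exp]
  simp [div_eq_inv_mul]

/-- Integral form of the Bielecki bound for a scalar function `f`; in the application
`f s = ‖y₂ s - y₁ s‖₁`. -/
lemma integral_le_bielecki (T γ : ℝ) (hT : 0 < T) (hγ : 0 < γ) (f : ℝ → ℝ)
    (hf : ContinuousOn f (Icc 0 T)) :
    ∫ s in (0:ℝ)..T, f s ≤ (Real.exp (γ * T) - 1) / γ *
      sSup ((fun s => Real.exp (-(γ * s)) * f s) '' Icc 0 T) := by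
  set M := sSup ((fun s => Real.exp (-(γ * s)) * f s) '' Icc 0 T)
  have hbdd : BddAbove ((fun s => Real.exp (-(γ * s)) * f s) '' Icc 0 T) :=
    isCompact_Icc.bddAbove_image (by fun_prop)
  have hpt : ∀ s ∈ Icc 0 T, f s ≤ Real.exp (γ * s) * M := by
    intro s hs
    have h : Real.exp (-(γ * s)) * f s ≤ M := le_csSup hbdd ⟨s, hs, rfl⟩
    calc f s = Real.exp (γ * s) * (Real.exp (-(γ * s)) * f s) := by
          rw [← mul_assoc, ← Real.exp_add]; simp
      _ ≤ Real.exp (γ * s) * M := by gcongr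
  calc ∫ s in (0:ℝ)..T, f s ≤ ∫ s in (0:ℝ)..T, Real.exp (γ * s) * M :=
        intervalIntegral.integral_mono_on hT.le (hf.intervalIntegrable_of_Icc hT.le)
          (Continuous.intervalIntegrable (by fun_prop) _ _) hpt
    _ = _ := by rw [intervalIntegral.integral_mul_const, integral_exp_mul T γ hγ.ne']

/-- Properties of the nonlocal mean-value term `ψ(x)_j = (a_j/T)∫₀ᵀ x_j` of the
multi-agent optimization problem, in the ℓ¹-norm:
(i) the Bielecki-norm Lipschitz estimate with constant `max_j|a_j|·(e^{γT}−1)/(γT)`;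
(ii) this constant can be made `< 1` for a suitable Bielecki parameter `γ`. -/
theorem maop_nonlocal_term_estimates (T : ℝ) (hT : 0 < T) (n : ℕ) (hn : 0 < n)
    (a : Fin n → ℝ) (A : ℝ) (hA : IsGreatest (range fun j => |a j|) A)
    (hA0 : 0 < A) (hA1 : A < 1) :
    (∀ γ : ℝ, 0 < γ → ∀ y₁ y₂ : ℝ → Fin n → ℝ,
      ContinuousOn y₁ (Icc 0 T) → ContinuousOn y₂ (Icc 0 T) →
      ∑ j, |a j * ((1 / T) * ∫ ζ in (0:ℝ)..T, y₂ ζ j) -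
          a j * ((1 / T) * ∫ ζ in (0:ℝ)..T, y₁ ζ j)| ≤
        A * ((Real.exp (γ * T) - 1) / (γ * T)) *
          sSup ((fun s => Real.exp (-(γ * s)) * ∑ j, |y₂ s j - y₁ s j|) '' Icc 0 T)) ∧
    (∃ γ ∈ Ioc (0:ℝ) ((1 / T) * Real.log (1 / A)),
      A * ((Real.exp (γ * T) - 1) / (γ * T)) < 1) := by
  refine ⟨fun γ hγ y₁ y₂ h₁ h₂ => ?_, (1 / T) * Real.log (1 / A), ⟨?_, le_rfl⟩, ?_⟩
  · have hc₁ : ∀ j, ContinuousOn (fun s => y₁ s j) (Icc 0 T) := continuousOn_pi.1 h₁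
    have hc₂ : ∀ j, ContinuousOn (fun s => y₂ s j) (Icc 0 T) := continuousOn_pi.1 h₂
    have hd : ∀ j, ContinuousOn (fun s => |y₂ s j - y₁ s j|) (Icc 0 T) :=
      fun j => ((hc₂ j).sub (hc₁ j)).abs
    have hcoord : ∀ j, |a j * ((1 / T) * ∫ ζ in (0:ℝ)..T, y₂ ζ j) -
        a j * ((1 / T) * ∫ ζ in (0:ℝ)..T, y₁ ζ j)| ≤
        A / T * ∫ ζ in (0:ℝ)..T, |y₂ ζ j - y₁ ζ j| := by
      intro j
      have haj : |a j| ≤ A := hA.2 ⟨j, rfl⟩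
      have hint : |∫ ζ in (0:ℝ)..T, (y₂ ζ j - y₁ ζ j)| ≤
          ∫ ζ in (0:ℝ)..T, |y₂ ζ j - y₁ ζ j| :=
        intervalIntegral.abs_integral_le_integral_abs hT.le
      rw [← mul_sub, ← mul_sub, ← intervalIntegral.integral_sub
        ((hc₂ j).intervalIntegrable_of_Icc hT.le) ((hc₁ j).intervalIntegrable_of_Icc hT.le),
        ← mul_assoc, abs_mul, abs_mul, abs_of_pos (one_div_pos.2 hT), mul_one_div]
      gcongr
    calc _ ≤ ∑ j, A / T * ∫ ζ in (0:ℝ)..T, |y₂ ζ j - y₁ ζ j| :=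
          Finset.sum_le_sum fun j _ => hcoord j
      _ = A / T * ∫ ζ in (0:ℝ)..T, ∑ j, |y₂ ζ j - y₁ ζ j| := by
          rw [← Finset.mul_sum, intervalIntegral.integral_finsetSum
            fun j _ => (hd j).intervalIntegrable_of_Icc hT.le]
      _ ≤ A / T * ((Real.exp (γ * T) - 1) / γ *
          sSup ((fun s => Real.exp (-(γ * s)) * ∑ j, |y₂ s j - y₁ s j|) '' Icc 0 T)) := by
          gcongr
          exact integral_le_bielecki T γ hT hγ _ (continuousOn_finsetSum _ fun j _ => hd j)
      _ = _ := by field_simp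
  · exact mul_pos (one_div_pos.2 hT) (Real.log_pos (one_lt_one_div hA0 hA1))
  · have hx : 1 / T * Real.log (1 / A) * T = Real.log (1 / A) := by field_simp
    have hlog : Real.log A < A - 1 := Real.log_lt_sub_one_of_pos hA0 hA1.ne
    have hinv : Real.log (1 / A) = -Real.log A := by rw [one_div, Real.log_inv]
    rw [hx, Real.exp_log (one_div_pos.2 hA0), ← mul_div_assoc, div_lt_one (by linarith),
      mul_sub, mul_one_div_cancel hA0.ne']
    linarith
end
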